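/- Let L > μ > 0, λ > 0, let F ∈ ℝ^{p×d} satisfy F·Fᵀ = I_p, and let b ∈ ℝ^d satisfy Fᵀ·F·b = 0. Define h : ℝ^d → ℝ by h(z) = (μ/2)‖z‖² + ((L−μ)/2)‖Fz‖² − ⟨b,z⟩. Then for every z ∈ ℝ^d, the Moreau envelope inf_{z' ∈ ℝ^d} ( h(z') + (1/(2λ))‖z'−z‖² ) equals (μλ̂/2)‖z‖² + ((Lλ̂ − μλ̂)/2)‖Fz‖² − Bλ̂·⟨b,z⟩ − Cλ̂, where Lλ̂ := (λ + 1/L)^{−1}, μλ̂ := (λ + 1/μ)^{−1}, Bλ̂ := (1 + λμ)^{−1}, and Cλ̂ := λ‖b‖²/(2(1+λμ)). -/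

import Mathlib

open scoped RealInnerProductSpace Matrix

/-!
The objective in the Moreau envelope of the quadratic `½⟪A x, x⟫ - ⟪b, x⟫` is, up to the factor
`1 / (2λ)` and the constant `‖z‖²`, the quadratic `⟪(1 + λA) x, x⟫ - 2⟪z + λb, x⟫`. Completing the
square around the solution `m` of `(1 + λA) m = z + λb` shows that the envelope equals
`(‖z‖² - ⟪z + λb, m⟫) / (2λ)`. In the case at hand `A` acts as `L` on the range of the orthogonal
projection `FᵀF` and as `μ` on its kernel, so the inverse of `1 + λA` is explicit.
-/

/-- The Moreau envelope of `h` with parameter `lam` at `z`. As a real infimum, it has the junk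
value `0` when the objective is not bounded below. -/
noncomputable def moreauEnvelope {E : Type*} [NormedAddCommGroup E] (lam : ℝ) (h : E → ℝ) (z : E) :
    ℝ :=
  ⨅ x, (h x + 1 / (2 * lam) * ‖x - z‖ ^ 2)

section Quadratic

variable {E : Type*} [NormedAddCommGroup E] [InnerProductSpace ℝ E]

theorem inner_map_self_sub_two_mul_inner_eq {S : E →ₗ[ℝ] E} (hS : S.IsSymmetric) {m c : E}
    (hm : S m = c) (x : E) :
    ⟪S x, x⟫ - 2 * ⟪c, x⟫ = ⟪S (x - m), x - m⟫ - ⟪c, m⟫ := by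
  have hxm : ⟪S x, m⟫ = ⟪c, x⟫ := by rw [hS, hm, real_inner_comm]
  simp only [map_sub, inner_sub_left, inner_sub_right, hm, hxm]
  ring

theorem isLeast_range_inner_map_self_sub_two_mul_inner {S : E →ₗ[ℝ] E} (hS : S.IsPositive)
    {m c : E} (hm : S m = c) :
    IsLeast (Set.range fun x ↦ ⟪S x, x⟫ - 2 * ⟪c, x⟫) (-⟪c, m⟫) := by
  have square := inner_map_self_sub_two_mul_inner_eq hS.isSymmetric hm
  refine ⟨⟨m, by simp [square]⟩, ?_⟩
  rintro _ ⟨x, rfl⟩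
  have nonneg : 0 ≤ ⟪S (x - m), x - m⟫ := hS.re_inner_nonneg_left (x - m)
  linarith [square x]

theorem moreauEnvelope_quadratic {lam : ℝ} (hlam : 0 < lam) {A : E →ₗ[ℝ] E}
    (hA : (1 + lam • A).IsPositive) {b z m : E} (hm : (1 + lam • A) m = z + lam • b) :
    moreauEnvelope lam (fun x ↦ 1 / 2 * ⟪A x, x⟫ - ⟪b, x⟫) z =
      (‖z‖ ^ 2 - ⟪z + lam • b, m⟫) / (2 * lam) := by
  have objective_eq (x : E) :
      1 / 2 * ⟪A x, x⟫ - ⟪b, x⟫ + 1 / (2 * lam) * ‖x - z‖ ^ 2 =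
        1 / (2 * lam) *
          (‖z‖ ^ 2 + (⟪(1 + lam • A) x, x⟫ - 2 * ⟪z + lam • b, x⟫)) := by
    simp only [LinearMap.add_apply, Module.End.one_apply, LinearMap.smul_apply, inner_add_left,
      real_inner_smul_left, real_inner_self_eq_norm_sq, norm_sub_sq_real, real_inner_comm z x]
    field_simp
    ring
  have least := isLeast_range_inner_map_self_sub_two_mul_inner hA hm
  have infimum_eq : ⨅ x, (⟪(1 + lam • A) x, x⟫ - 2 * ⟪z + lam • b, x⟫) = -⟪z + lam • b, m⟫ :=
    least.csInf_eq
  simp only [moreauEnvelope, objective_eq]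
  rw [← Real.mul_iInf_of_nonneg (by positivity), ← add_ciInf ⟨_, least.2⟩, infimum_eq]
  ring

end Quadratic

/-- The operator acting as `α` on the kernel of a projection `P` and as `β` on its range.
The Hessian of the quadratic function and the linear part of its proximal map have this form. -/
def kerRangeScaling {R M : Type*} [CommRing R] [AddCommGroup M] [Module R M] (P : M →ₗ[R] M)
    (α β : R) : M →ₗ[R] M :=
  α • (1 - P) + β • P

section Algebra

variable {R M : Type*} [CommRing R] [AddCommGroup M] [Module R M] {P : M →ₗ[R] M}

theorem kerRangeScaling_one_one : kerRangeScaling P 1 1 = 1 := by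
  rw [kerRangeScaling, one_smul, one_smul, sub_add_cancel]

theorem one_add_smul_kerRangeScaling (c α β : R) :
    1 + c • kerRangeScaling P α β = kerRangeScaling P (1 + c * α) (1 + c * β) := by
  simp only [kerRangeScaling]
  module

theorem kerRangeScaling_mul_kerRangeScaling (hP : IsIdempotentElem P) (α β α' β' : R) :
    kerRangeScaling P α β * kerRangeScaling P α' β' = kerRangeScaling P (α * α') (β * β') := by
  simp only [kerRangeScaling, add_mul, mul_add, smul_mul_smul_comm, hP.one_sub.eq, hP.eq,
    hP.mul_one_sub_self, hP.one_sub_mul_self, smul_zero, add_zero, zero_add]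

end Algebra

section InnerProductSpace

variable {E : Type*} [NormedAddCommGroup E] [InnerProductSpace ℝ E] {P : E →ₗ[ℝ] E}

theorem inner_kerRangeScaling_apply_self (hP : P.IsSymmetricProjection) (α β : ℝ) (x : E) :
    ⟪kerRangeScaling P α β x, x⟫ = α * (‖x‖ ^ 2 - ‖P x‖ ^ 2) + β * ‖P x‖ ^ 2 := by
  have hPx : ⟪P x, x⟫ = ‖P x‖ ^ 2 := by
    rw [← real_inner_self_eq_norm_sq, ← hP.isSymmetric, ← Module.End.mul_apply,
      hP.isIdempotentElem.eq]
  simp only [kerRangeScaling, LinearMap.add_apply, LinearMap.smul_apply, LinearMap.sub_apply,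
    Module.End.one_apply, inner_add_left, inner_sub_left, real_inner_smul_left,
    real_inner_self_eq_norm_sq, hPx]

theorem isPositive_kerRangeScaling (hP : P.IsSymmetricProjection) {α β : ℝ}
    (hα : 0 ≤ α) (hβ : 0 ≤ β) :
    (kerRangeScaling P α β).IsPositive := by
  have hQ : (1 - P).IsSymmetricProjection :=
    ⟨hP.isIdempotentElem.one_sub, LinearMap.IsSymmetric.one.sub hP.isSymmetric⟩
  exact (hQ.isPositive.smul_of_nonneg hα).add (hP.isPositive.smul_of_nonneg hβ)

end InnerProductSpace

section Matrix

variable {𝕜 m n : Type*} [RCLike 𝕜] [Fintype m] [DecidableEq m] [Fintype n] [DecidableEq n]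
  {F : Matrix m n 𝕜}

theorem isSymmetricProjection_toEuclideanLin_conjTranspose_mul_self (hF : F * Fᴴ = 1) :
    (Matrix.toEuclideanLin (Fᴴ * F)).IsSymmetricProjection where
  isIdempotentElem := by
    rw [IsIdempotentElem, Module.End.mul_eq_comp, ← Matrix.toLpLin_mul_same, Matrix.mul_assoc,
      ← Matrix.mul_assoc F, hF, Matrix.one_mul]
  isSymmetric :=
    Matrix.isSymmetric_toEuclideanLin_iff.mpr (Matrix.isHermitian_conjTranspose_mul_self F)

theorem norm_toEuclideanLin_conjTranspose_mul_self_apply (hF : F * Fᴴ = 1)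
    (x : EuclideanSpace 𝕜 n) :
    ‖Matrix.toEuclideanLin (Fᴴ * F) x‖ = ‖Matrix.toEuclideanLin F x‖ := by
  have adjoint_isometry (y : EuclideanSpace 𝕜 m) : ‖Matrix.toEuclideanLin Fᴴ y‖ = ‖y‖ := by
    rw [@norm_eq_sqrt_re_inner 𝕜, @norm_eq_sqrt_re_inner 𝕜 _ _ _ _ y]
    nth_rw 1 [Matrix.toEuclideanLin_conjTranspose_eq_adjoint]
    rw [LinearMap.adjoint_inner_left, ← LinearMap.comp_apply, ← Matrix.toLpLin_mul_same, hF,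
      Matrix.toLpLin_one, LinearMap.id_apply]
  rw [Matrix.toLpLin_mul_same, LinearMap.comp_apply, adjoint_isometry]

end Matrix

theorem inv_add_one_div {K : Type*} [Field K] {a : K} (ha : a ≠ 0) (c : K) :
    (c + 1 / a)⁻¹ = a / (1 + c * a) := by
  rw [add_div' _ _ _ ha, inv_div, add_comm]

theorem moreau_envelope_formula_general {E : Type*} [NormedAddCommGroup E]
    [InnerProductSpace ℝ E] {P : E →ₗ[ℝ] E} (hP : P.IsSymmetricProjection)
    {L μ lam : ℝ} (hlam : 0 < lam) (hμ : 0 < 1 + lam * μ) (hL : 0 < 1 + lam * L)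
    {b : E} (hb : P b = 0) {h : E → ℝ}
    (hh : ∀ z, h z = μ / 2 * ‖z‖ ^ 2 + (L - μ) / 2 * ‖P z‖ ^ 2 - ⟪b, z⟫) (z : E) :
    moreauEnvelope lam h z =
      μ / (1 + lam * μ) / 2 * ‖z‖ ^ 2 +
        (L / (1 + lam * L) - μ / (1 + lam * μ)) / 2 * ‖P z‖ ^ 2 -
        (1 + lam * μ)⁻¹ * ⟪b, z⟫ - lam * ‖b‖ ^ 2 / (2 * (1 + lam * μ)) := by
  have h_eq : h = fun x ↦ 1 / 2 * ⟪kerRangeScaling P μ L x, x⟫ - ⟪b, x⟫ := by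
    ext x
    rw [hh, inner_kerRangeScaling_apply_self hP]
    ring
  have pos : (1 + lam • kerRangeScaling P μ L).IsPositive := by
    rw [one_add_smul_kerRangeScaling]
    exact isPositive_kerRangeScaling hP hμ.le hL.le
  have prox : (1 + lam • kerRangeScaling P μ L)
      (kerRangeScaling P (1 + lam * μ)⁻¹ (1 + lam * L)⁻¹ (z + lam • b)) = z + lam • b := by
    rw [one_add_smul_kerRangeScaling, ← Module.End.mul_apply,
      kerRangeScaling_mul_kerRangeScaling hP.isIdempotentElem, mul_inv_cancel₀ hμ.ne',
      mul_inv_cancel₀ hL.ne', kerRangeScaling_one_one, Module.End.one_apply]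
  have hPzb : P (z + lam • b) = P z := by rw [map_add, map_smul, hb, smul_zero, add_zero]
  rw [h_eq, moreauEnvelope_quadratic hlam pos prox, real_inner_comm,
    inner_kerRangeScaling_apply_self hP, hPzb, norm_add_sq_real, real_inner_smul_right,
    real_inner_comm b z, norm_smul, mul_pow, Real.norm_eq_abs, sq_abs]
  field_simp
  ring

/-- Explicit formula for the Moreau envelope of
`h(z) = (μ/2)‖z‖² + ((L−μ)/2)‖Fz‖² − ⟨b,z⟩` when `F Fᵀ = I` and `Fᵀ F b = 0`. -/
theorem moreau_envelope_formula (d p : ℕ) (L μ lam : ℝ)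
    (hμ : 0 < μ) (hL : μ < L) (hlam : 0 < lam)
    (F : Matrix (Fin p) (Fin d) ℝ) (hF : F * Fᵀ = 1)
    (b : EuclideanSpace ℝ (Fin d)) (hb : Matrix.toEuclideanLin (Fᵀ * F) b = 0)
    (h : EuclideanSpace ℝ (Fin d) → ℝ)
    (hh : ∀ z, h z = μ / 2 * ‖z‖ ^ 2 + (L - μ) / 2 * ‖Matrix.toEuclideanLin F z‖ ^ 2 - ⟪b, z⟫) :
    ∀ z : EuclideanSpace ℝ (Fin d),
      (⨅ z' : EuclideanSpace ℝ (Fin d), (h z' + 1 / (2 * lam) * ‖z' - z‖ ^ 2)) =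
        (lam + 1 / μ)⁻¹ / 2 * ‖z‖ ^ 2 +
          ((lam + 1 / L)⁻¹ - (lam + 1 / μ)⁻¹) / 2 * ‖Matrix.toEuclideanLin F z‖ ^ 2 -
          (1 + lam * μ)⁻¹ * ⟪b, z⟫ - lam * ‖b‖ ^ 2 / (2 * (1 + lam * μ)) := by
  have hL₀ : 0 < L := hμ.trans hL
  rw [← Matrix.conjTranspose_eq_transpose_of_trivial] at hF hb
  simp only [← norm_toEuclideanLin_conjTranspose_mul_self_apply hF] at hh ⊢
  rw [inv_add_one_div hμ.ne', inv_add_one_div hL₀.ne']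
  exact moreau_envelope_formula_general
    (isSymmetricProjection_toEuclideanLin_conjTranspose_mul_self hF) hlam (by positivity)
    (by positivity) hb hh
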